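/- Let ℓ : ℝ² → ℝ^{2n} be a C⁴ (e.g. smooth), ℤ²-periodic, isotropic map. Then there exists a constant C > 0 such that for every integer N ≥ 1, every z ∈ ℝ², and each of the two diagonal translation vectors t = (1/N, 1/N) and t = (−1/N, 1/N): |ω(Dᵘ_N(z + t), Dᵛ_N(z + t)) − ω(Dᵘ_N(z), Dᵛ_N(z))| ≤ C · N^{-5}. Consequently the rescaled diagonal finite differences (N/√2)(η_N(z+t) − η_N(z)) of the discrete symplectic density η_N(z) = (N²/2)·ω(Dᵘ_N(z), Dᵛ_N(z)) are bounded by a constant times N^{-2}, uniformly in z and in the direction t; i.e. ‖η_N‖ in the weak discrete C¹-norm is O(N^{-2}). -/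

import Mathlib

/-- The point of `ℝ² = EuclideanSpace ℝ (Fin 2)` with coordinates `(a, b)`. -/
noncomputable def e2 (a b : ℝ) : EuclideanSpace ℝ (Fin 2) :=
  (WithLp.equiv 2 (Fin 2 → ℝ)).symm ![a, b]

/-- The standard symplectic form `ω` on `ℝ^{2n}`:
`ω(u,v) = ∑_{j=0}^{n-1} (u_{2j} v_{2j+1} − u_{2j+1} v_{2j})`. -/
noncomputable def stdSymp (n : ℕ) (u v : EuclideanSpace ℝ (Fin (2 * n))) : ℝ :=
  ∑ j : Fin n,
    (u ⟨2 * j.1, by have := j.2; omega⟩ * v ⟨2 * j.1 + 1, by have := j.2; omega⟩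
      - u ⟨2 * j.1 + 1, by have := j.2; omega⟩ * v ⟨2 * j.1, by have := j.2; omega⟩)

/-- The first diagonal `Dᵘ_N(z) = ℓ(z + (1/N,1/N)) − ℓ(z)` of the sample quadrilateral. -/
noncomputable def Du (n : ℕ) (ℓ : EuclideanSpace ℝ (Fin 2) → EuclideanSpace ℝ (Fin (2 * n)))
    (N : ℕ) (z : EuclideanSpace ℝ (Fin 2)) : EuclideanSpace ℝ (Fin (2 * n)) :=
  ℓ (z + e2 (1 / N) (1 / N)) - ℓ z

/-- The second diagonal `Dᵛ_N(z) = ℓ(z + (0,1/N)) − ℓ(z + (1/N,0))` of the sample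
quadrilateral. -/
noncomputable def Dv (n : ℕ) (ℓ : EuclideanSpace ℝ (Fin 2) → EuclideanSpace ℝ (Fin (2 * n)))
    (N : ℕ) (z : EuclideanSpace ℝ (Fin 2)) : EuclideanSpace ℝ (Fin (2 * n)) :=
  ℓ (z + e2 0 (1 / N)) - ℓ (z + e2 (1 / N) 0)

/-!
Put `a = (p + q) / 2` and `b = (q - p) / 2`. Seen from the centre `x` of a parallelogram with edges
`p` and `q`, the two diagonals of the samples of `f` are the central differences
`Δ_a f x = f (x + a) - f (x - a)` and `Δ_b f x`. The function `Δ_s f` is `O(‖s‖)` and agrees with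
`x ↦ 2 Df_x s` up to `O(‖s‖³)`, both in the `C¹` norm: since `D` commutes with `Δ_s` and `D²f` is
symmetric, the estimate for the derivatives is the one for the values, applied to `Df` (this is what
costs the fourth derivative). Isotropy says `B (Df_x a) (Df_x b) = 0` identically, so
`B (Δ_a f) (Δ_b f) = B (Δ_a f - 2 Df a) (Δ_b f) + B (2 Df a) (Δ_b f - 2 Df b)`
is `O(‖a‖ ‖b‖ (‖a‖² + ‖b‖²))` in the `C¹` norm as well, and the mean value inequality along a
translation comparable to `p` and `q` yields the fifth power of the side length.
-/

/-- The central difference `Δ_s g (x) = g (x + s) - g (x - s)`, without the customary factor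
`1 / 2`. -/
def centralDiff {E F : Type*} [AddGroup E] [AddGroup F] (g : E → F) (s x : E) : F :=
  g (x + s) - g (x - s)

section CentralDifference

variable {E F : Type*} [NormedAddCommGroup E] [NormedSpace ℝ E]
  [NormedAddCommGroup F] [NormedSpace ℝ F]

theorem hasFDerivAt_centralDiff {g : E → F} (hg : Differentiable ℝ g) (s x : E) :
    HasFDerivAt (centralDiff g s) (centralDiff (fderiv ℝ g) s x) x :=
  ((hasFDerivAt_comp_add_right s).2 (hg _).hasFDerivAt).fun_sub
    ((hasFDerivAt_comp_sub s).2 (hg _).hasFDerivAt)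

theorem hasFDerivAt_comp_const_sub {g : E → F} {c s : E} (hg : DifferentiableAt ℝ g (c - s)) :
    HasFDerivAt (fun s => g (c - s)) (-fderiv ℝ g (c - s)) s := by
  simpa [Function.comp_def] using hg.hasFDerivAt.comp s ((hasFDerivAt_id s).const_sub c)

theorem hasFDerivAt_centralDiff_step {g : E → F} (hg : Differentiable ℝ g) (s x : E) :
    HasFDerivAt (fun s => centralDiff g s x) (fderiv ℝ g (x + s) + fderiv ℝ g (x - s)) s := by
  simpa only [centralDiff, sub_neg_eq_add] using
    ((hasFDerivAt_comp_add_left x).2 (hg _).hasFDerivAt).fun_sub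
      (hasFDerivAt_comp_const_sub (hg (x - s)))

theorem norm_le_mul_norm_pow_succ_of_hasFDerivAt {r : E → F} {r' : E → E →L[ℝ] F} {K : ℝ} {k : ℕ}
    (hr0 : r 0 = 0) (hr : ∀ s, HasFDerivAt r (r' s) s) (hK : ∀ s, ‖r' s‖ ≤ K * ‖s‖ ^ k) (s : E) :
    ‖r s‖ ≤ K * ‖s‖ ^ (k + 1) := by
  rcases eq_or_ne s 0 with rfl | hs
  · simp [hr0]
  have hK0 : 0 ≤ K :=
    nonneg_of_mul_nonneg_left ((norm_nonneg _).trans (hK s)) (pow_pos (norm_pos_iff.2 hs) k)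
  have hbound : ∀ y ∈ Metric.closedBall (0 : E) ‖s‖, ‖r' y‖ ≤ K * ‖s‖ ^ k := fun y hy =>
    (hK y).trans <| by gcongr; simpa using hy
  have hmean := (convex_closedBall (0 : E) ‖s‖).norm_image_sub_le_of_norm_hasFDerivWithin_le
    (fun y _ => (hr y).hasFDerivWithinAt) hbound (x := 0) (y := s) (by simp) (by simp)
  simpa [hr0, pow_succ, mul_assoc] using hmean

theorem norm_centralDiff_le {g : E → F} {M : ℝ} (hg : Differentiable ℝ g)
    (hM : ∀ x, ‖iteratedFDeriv ℝ 1 g x‖ ≤ M) (s x : E) :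
    ‖centralDiff g s x‖ ≤ 2 * M * ‖s‖ := by
  have hbound (s : E) : ‖fderiv ℝ g (x + s) + fderiv ℝ g (x - s)‖ ≤ 2 * M * ‖s‖ ^ 0 := by
    simp only [norm_iteratedFDeriv_one] at hM
    linarith [norm_add_le (fderiv ℝ g (x + s)) (fderiv ℝ g (x - s)), hM (x + s), hM (x - s)]
  simpa using norm_le_mul_norm_pow_succ_of_hasFDerivAt (by simp [centralDiff])
    (fun s => hasFDerivAt_centralDiff_step hg s x) hbound s

theorem norm_add_sub_two_smul_le {g : E → F} {M : ℝ} (hg : ContDiff ℝ 2 g)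
    (hM : ∀ x, ‖iteratedFDeriv ℝ 2 g x‖ ≤ M) (s x : E) :
    ‖g (x + s) + g (x - s) - (2 : ℝ) • g x‖ ≤ 2 * M * ‖s‖ ^ 2 := by
  have hg0 : Differentiable ℝ g := hg.differentiable (by norm_num)
  have hg1 : Differentiable ℝ (fderiv ℝ g) :=
    (hg.fderiv_right (m := 1) (by norm_num)).differentiable one_ne_zero
  have hderiv (s : E) : HasFDerivAt (fun s => g (x + s) + g (x - s) - (2 : ℝ) • g x)
      (centralDiff (fderiv ℝ g) s x) s := by
    simpa [centralDiff, sub_eq_add_neg] using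
      (((hasFDerivAt_comp_add_left x).2 (hg0 _).hasFDerivAt).fun_add
        (hasFDerivAt_comp_const_sub (hg0 (x - s)))).sub_const ((2 : ℝ) • g x)
  refine norm_le_mul_norm_pow_succ_of_hasFDerivAt (by simp [two_smul]) hderiv (fun s => ?_) s
  simpa using norm_centralDiff_le hg1 (fun y => norm_iteratedFDeriv_fderiv.trans_le (hM y)) s x

theorem norm_centralDiff_sub_two_smul_fderiv_le {g : E → F} {M : ℝ} (hg : ContDiff ℝ 3 g)
    (hM : ∀ x, ‖iteratedFDeriv ℝ 3 g x‖ ≤ M) (s x : E) :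
    ‖centralDiff g s x - (2 : ℝ) • fderiv ℝ g x s‖ ≤ 2 * M * ‖s‖ ^ 3 := by
  have hg0 : Differentiable ℝ g := hg.differentiable (by norm_num)
  have hderiv (s : E) : HasFDerivAt (fun s => centralDiff g s x - (2 : ℝ) • fderiv ℝ g x s)
      (fderiv ℝ g (x + s) + fderiv ℝ g (x - s) - (2 : ℝ) • fderiv ℝ g x) s :=
    (hasFDerivAt_centralDiff_step hg0 s x).fun_sub ((fderiv ℝ g x).hasFDerivAt.fun_const_smul 2)
  exact norm_le_mul_norm_pow_succ_of_hasFDerivAt (by simp [centralDiff]) hderiv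
    (fun s => norm_add_sub_two_smul_le (hg.fderiv_right (by norm_num))
      (fun y => norm_iteratedFDeriv_fderiv.trans_le (hM y)) s x) s

theorem hasFDerivAt_fderiv_apply {f : E → F} (hf : ContDiff ℝ 2 f) (s x : E) :
    HasFDerivAt (fun x => fderiv ℝ f x s) (fderiv ℝ (fderiv ℝ f) x s) x := by
  have hf1 : Differentiable ℝ (fderiv ℝ f) :=
    (hf.fderiv_right (m := 1) (by norm_num)).differentiable one_ne_zero
  refine ((hf1 x).hasFDerivAt.clm_apply (hasFDerivAt_const s x)).congr_fderiv ?_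
  ext v
  simpa using hf.contDiffAt.isSymmSndFDerivAt (by simp) v s

end CentralDifference

section C1Bound

variable {E F G : Type*} [NormedAddCommGroup E] [NormedSpace ℝ E]
  [NormedAddCommGroup F] [NormedSpace ℝ F] [NormedAddCommGroup G] [NormedSpace ℝ G]

/-- `HasC1Bound g K` says that the `C¹` norm of `g`, in the sense of the larger of the suprema of
`‖g‖` and `‖Dg‖`, is at most `K`. The derivative is not required to be continuous. -/
structure HasC1Bound (g : E → F) (K : ℝ) : Prop where
  differentiable : Differentiable ℝ g
  norm_le : ∀ x, ‖g x‖ ≤ K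
  norm_fderiv_le : ∀ x, ‖fderiv ℝ g x‖ ≤ K

namespace HasC1Bound

theorem of_hasFDerivAt {g : E → F} {g' : E → E →L[ℝ] F} {K : ℝ}
    (hg : ∀ x, HasFDerivAt g (g' x) x) (hK : ∀ x, ‖g x‖ ≤ K) (hK' : ∀ x, ‖g' x‖ ≤ K) :
    HasC1Bound g K where
  differentiable x := (hg x).differentiableAt
  norm_le := hK
  norm_fderiv_le x := (hg x).fderiv ▸ hK' x

theorem norm_sub_le {g : E → F} {K : ℝ} (hg : HasC1Bound g K) (x y : E) :
    ‖g y - g x‖ ≤ K * ‖y - x‖ :=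
  convex_univ.norm_image_sub_le_of_norm_fderiv_le (fun z _ => hg.differentiable z)
    (fun z _ => hg.norm_fderiv_le z) (Set.mem_univ x) (Set.mem_univ y)

theorem add {g₁ g₂ : E → F} {K₁ K₂ : ℝ} (h₁ : HasC1Bound g₁ K₁) (h₂ : HasC1Bound g₂ K₂) :
    HasC1Bound (fun x => g₁ x + g₂ x) (K₁ + K₂) :=
  of_hasFDerivAt
    (fun x => (h₁.differentiable x).hasFDerivAt.fun_add (h₂.differentiable x).hasFDerivAt)
    (fun x => norm_add_le_of_le (h₁.norm_le x) (h₂.norm_le x))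
    (fun x => norm_add_le_of_le (h₁.norm_fderiv_le x) (h₂.norm_fderiv_le x))

theorem bilin {H : Type*} [NormedAddCommGroup H] [NormedSpace ℝ H] (B : F →L[ℝ] G →L[ℝ] H)
    {g₁ : E → F} {g₂ : E → G} {K₁ K₂ : ℝ} (h₁ : HasC1Bound g₁ K₁) (h₂ : HasC1Bound g₂ K₂) :
    HasC1Bound (fun x => B (g₁ x) (g₂ x)) (2 * ‖B‖ * K₁ * K₂) := by
  have hB (x : E) : ‖B (g₁ x) (g₂ x)‖ ≤ ‖B‖ * K₁ * K₂ :=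
    B.le_of_opNorm₂_le_of_le le_rfl (h₁.norm_le x) (h₂.norm_le x)
  have hR (x : E) : ‖B.precompR E (g₁ x) (fderiv ℝ g₂ x)‖ ≤ ‖B‖ * K₁ * K₂ :=
    (B.precompR E).le_of_opNorm₂_le_of_le (B.norm_precompR_le E) (h₁.norm_le x)
      (h₂.norm_fderiv_le x)
  have hL (x : E) : ‖B.precompL E (fderiv ℝ g₁ x) (g₂ x)‖ ≤ ‖B‖ * K₁ * K₂ :=
    (B.precompL E).le_of_opNorm₂_le_of_le (B.norm_precompL_le E) (h₁.norm_fderiv_le x)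
      (h₂.norm_le x)
  refine of_hasFDerivAt (fun x => B.hasFDerivAt_of_bilinear (h₁.differentiable x).hasFDerivAt
    (h₂.differentiable x).hasFDerivAt) (fun x => ?_) (fun x => ?_)
  · linarith [hB x, norm_nonneg (B (g₁ x) (g₂ x))]
  · linarith [norm_add_le_of_le (hR x) (hL x)]

end HasC1Bound

variable {f : E → F} {M : ℝ}

theorem hasC1Bound_centralDiff (hf : ContDiff ℝ 2 f) (hM₁ : ∀ x, ‖iteratedFDeriv ℝ 1 f x‖ ≤ M)
    (hM₂ : ∀ x, ‖iteratedFDeriv ℝ 2 f x‖ ≤ M) (s : E) :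
    HasC1Bound (centralDiff f s) (2 * M * ‖s‖) := by
  have hf0 : Differentiable ℝ f := hf.differentiable (by norm_num)
  exact .of_hasFDerivAt (hasFDerivAt_centralDiff hf0 s) (norm_centralDiff_le hf0 hM₁ s)
    (norm_centralDiff_le ((hf.fderiv_right (m := 1) (by norm_num)).differentiable one_ne_zero)
      (fun y => norm_iteratedFDeriv_fderiv.trans_le (hM₂ y)) s)

theorem hasC1Bound_two_smul_fderiv_apply (hf : ContDiff ℝ 2 f)
    (hM₁ : ∀ x, ‖iteratedFDeriv ℝ 1 f x‖ ≤ M) (hM₂ : ∀ x, ‖iteratedFDeriv ℝ 2 f x‖ ≤ M) (s : E) :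
    HasC1Bound (fun x => (2 : ℝ) • fderiv ℝ f x s) (2 * M * ‖s‖) := by
  have hD (x : E) : ‖fderiv ℝ f x‖ ≤ M := by simpa using hM₁ x
  have hD2 (x : E) : ‖fderiv ℝ (fderiv ℝ f) x‖ ≤ M := by
    simpa [← norm_iteratedFDeriv_one, norm_iteratedFDeriv_fderiv] using hM₂ x
  refine .of_hasFDerivAt (fun x => (hasFDerivAt_fderiv_apply hf s x).fun_const_smul (2 : ℝ))
    (fun x => ?_) (fun x => ?_)
  all_goals rw [norm_smul, Real.norm_two, mul_assoc]; gcongr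
  · exact (fderiv ℝ f x).le_of_opNorm_le (hD x) s
  · exact (fderiv ℝ (fderiv ℝ f) x).le_of_opNorm_le (hD2 x) s

theorem hasC1Bound_centralDiff_sub_two_smul_fderiv_apply (hf : ContDiff ℝ 4 f)
    (hM₃ : ∀ x, ‖iteratedFDeriv ℝ 3 f x‖ ≤ M) (hM₄ : ∀ x, ‖iteratedFDeriv ℝ 4 f x‖ ≤ M) (s : E) :
    HasC1Bound (fun x => centralDiff f s x - (2 : ℝ) • fderiv ℝ f x s) (2 * M * ‖s‖ ^ 3) :=
  .of_hasFDerivAt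
    (fun x => (hasFDerivAt_centralDiff (hf.differentiable (by norm_num)) s x).fun_sub
      ((hasFDerivAt_fderiv_apply (hf.of_le (by norm_num)) s x).fun_const_smul (2 : ℝ)))
    (norm_centralDiff_sub_two_smul_fderiv_le (hf.of_le (by norm_num)) hM₃ s)
    (norm_centralDiff_sub_two_smul_fderiv_le (hf.fderiv_right (by norm_num))
      (fun y => norm_iteratedFDeriv_fderiv.trans_le (hM₄ y)) s)

end C1Bound

section DiagonalPairing

variable {E F G : Type*} [AddCommGroup E] [NormedAddCommGroup F] [NormedSpace ℝ F]
  [NormedAddCommGroup G] [NormedSpace ℝ G]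

/-- The value of the bilinear map `B` on the two diagonals of the quadrilateral of samples of `f`
at the vertices `z`, `z + p`, `z + p + q`, `z + q` of a parallelogram. For `B = ω` and the lattice
square of side `1 / N` this is `ω(Dᵘ_N, Dᵛ_N)`. -/
noncomputable def diagonalPairing (B : F →L[ℝ] F →L[ℝ] G) (f : E → F) (p q z : E) : G :=
  B (f (z + (p + q)) - f z) (f (z + q) - f (z + p))

theorem diagonalPairing_eq_bilin_centralDiff (B : F →L[ℝ] F →L[ℝ] G) (f : E → F)
    (a b z : E) :
    diagonalPairing B f (a - b) (a + b) z =
      B (centralDiff f a (z + a)) (centralDiff f b (z + a)) := by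
  have hfar : z + (a - b + (a + b)) = z + a + a := by abel
  rw [diagonalPairing, centralDiff, centralDiff, hfar, add_sub_cancel_right, ← add_assoc,
    ← add_sub_assoc]

end DiagonalPairing

section Isotropic

variable {E F G : Type*} [NormedAddCommGroup E] [NormedSpace ℝ E]
  [NormedAddCommGroup F] [NormedSpace ℝ F] [NormedAddCommGroup G] [NormedSpace ℝ G]
  (B : F →L[ℝ] F →L[ℝ] G) {f : E → F} {M : ℝ}

theorem hasC1Bound_bilin_centralDiff (hf : ContDiff ℝ 4 f)
    (hM : ∀ i ∈ Finset.Icc 1 4, ∀ x, ‖iteratedFDeriv ℝ i f x‖ ≤ M) {a b : E}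
    (hiso : ∀ x, B (fderiv ℝ f x a) (fderiv ℝ f x b) = 0) :
    HasC1Bound (fun x => B (centralDiff f a x) (centralDiff f b x))
      (8 * ‖B‖ * M ^ 2 * ‖a‖ * ‖b‖ * (‖a‖ ^ 2 + ‖b‖ ^ 2)) := by
  have hf2 : ContDiff ℝ 2 f := hf.of_le (by norm_num)
  have hM₁ := hM 1 (by simp)
  have hM₂ := hM 2 (by simp)
  have happrox := hasC1Bound_centralDiff_sub_two_smul_fderiv_apply hf (hM 3 (by simp))
    (hM 4 (by simp))
  have hsum := ((happrox a).bilin B (hasC1Bound_centralDiff hf2 hM₁ hM₂ b)).add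
    ((hasC1Bound_two_smul_fderiv_apply hf2 hM₁ hM₂ a).bilin B (happrox b))
  convert hsum using 1
  · ext x
    simp [hiso x]
  · ring

theorem apply_eq_zero_of_apply_sub_add_eq_zero {B : F →L[ℝ] F →L[ℝ] G} (hB : ∀ x, B x x = 0)
    {x y : F} (h : B (x - y) (x + y) = 0) : B x y = 0 := by
  have hanti : B x y + B y x = 0 := by simpa [hB] using hB (x + y)
  have hexpand : B x y - B y x = 0 := by simpa [hB] using h
  have htwice : (2 : ℝ) • B x y = 0 := by linear_combination (norm := module) hanti + hexpand
  simpa using htwice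

theorem norm_diagonalPairing_add_sub_le (hB : ∀ x, B x x = 0) (hf : ContDiff ℝ 4 f)
    (hM : ∀ i ∈ Finset.Icc 1 4, ∀ x, ‖iteratedFDeriv ℝ i f x‖ ≤ M) {p q : E}
    (hiso : ∀ x, B (fderiv ℝ f x p) (fderiv ℝ f x q) = 0) (z t : E) :
    ‖diagonalPairing B f p q (z + t) - diagonalPairing B f p q z‖ ≤
      ‖B‖ * M ^ 2 * (‖p‖ + ‖q‖) ^ 4 * ‖t‖ := by
  obtain ⟨a, b, rfl, rfl⟩ : ∃ a b, p = a - b ∧ q = a + b :=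
    ⟨(1 / 2 : ℝ) • (p + q), (1 / 2 : ℝ) • (q - p), by module, by module⟩
  have hiso' (x : E) : B (fderiv ℝ f x a) (fderiv ℝ f x b) = 0 :=
    apply_eq_zero_of_apply_sub_add_eq_zero hB (by simpa only [map_sub, map_add] using hiso x)
  set r := ‖a - b‖ + ‖a + b‖
  have ha : ‖a‖ ≤ r / 2 := by
    have := norm_add_le (a - b) (a + b)
    rw [show a - b + (a + b) = (2 : ℝ) • a by module, norm_smul, Real.norm_two] at this
    linarith
  have hb : ‖b‖ ≤ r / 2 := by
    have := norm_sub_le (a + b) (a - b)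
    rw [show a + b - (a - b) = (2 : ℝ) • b by module, norm_smul, Real.norm_two] at this
    linarith
  simp only [diagonalPairing_eq_bilin_centralDiff]
  calc
    _ ≤ 8 * ‖B‖ * M ^ 2 * ‖a‖ * ‖b‖ * (‖a‖ ^ 2 + ‖b‖ ^ 2) * ‖t‖ := by
      simpa using (hasC1Bound_bilin_centralDiff B hf hM hiso').norm_sub_le (z + a) (z + t + a)
    _ ≤ 8 * ‖B‖ * M ^ 2 * (r / 2) * (r / 2) * ((r / 2) ^ 2 + (r / 2) ^ 2) * ‖t‖ := by gcongr
    _ = ‖B‖ * M ^ 2 * r ^ 4 * ‖t‖ := by ring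

end Isotropic

section Periodic

variable {E F : Type*} [NormedAddCommGroup E] [NormedSpace ℝ E]
  [NormedAddCommGroup F] [NormedSpace ℝ F]

theorem exists_norm_iteratedFDeriv_le_of_periodic {m : ℕ} {f : E → F} (hf : ContDiff ℝ m f)
    {Γ K : Set E} (hper : ∀ γ ∈ Γ, Function.Periodic f γ) (hK : IsCompact K)
    (hcover : ∀ x, ∃ γ ∈ Γ, x + γ ∈ K) :
    ∃ M, ∀ i ≤ m, ∀ x, ‖iteratedFDeriv ℝ i f x‖ ≤ M := by
  have hbound (i : Fin (m + 1)) : ∃ M, ∀ x ∈ K, ‖iteratedFDeriv ℝ i f x‖ ≤ M :=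
    hK.exists_bound_of_continuousOn
      (hf.continuous_iteratedFDeriv (mod_cast Nat.le_of_lt_succ i.2)).continuousOn
  choose M hM using hbound
  obtain ⟨M', hM'⟩ := Finite.exists_le M
  refine ⟨M', fun i hi x => ?_⟩
  obtain ⟨γ, hγ, hxγ⟩ := hcover x
  have hshift : iteratedFDeriv ℝ i f (x + γ) = iteratedFDeriv ℝ i f x := by
    rw [← iteratedFDeriv_comp_add_right, (hper γ hγ).funext]
  exact hshift ▸ (hM ⟨i, Nat.lt_succ_of_le hi⟩ _ hxγ).trans (hM' _)

end Periodic

section Plane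

@[simp]
theorem e2_apply_zero (a b : ℝ) : e2 a b 0 = a := rfl

@[simp]
theorem e2_apply_one (a b : ℝ) : e2 a b 1 = b := rfl

theorem e2_add (a b c d : ℝ) : e2 a b + e2 c d = e2 (a + c) (b + d) := by
  ext i; fin_cases i <;> simp

theorem smul_e2 (c a b : ℝ) : c • e2 a b = e2 (c * a) (c * b) := by
  ext i; fin_cases i <;> simp

theorem norm_e2_le (a b : ℝ) : ‖e2 a b‖ ≤ |a| + |b| := by
  simpa [EuclideanSpace.norm_eq, Fin.sum_univ_two] using
    Real.sqrt_le_iff.2 ⟨by positivity, by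
      nlinarith [sq_abs a, sq_abs b, mul_nonneg (abs_nonneg a) (abs_nonneg b)]⟩

theorem exists_add_e2_int_mem_closedBall (x : EuclideanSpace ℝ (Fin 2)) :
    ∃ k l : ℤ, x + e2 k l ∈ Metric.closedBall 0 2 := by
  refine ⟨-⌊x 0⌋, -⌊x 1⌋, ?_⟩
  have hx : x + e2 (-⌊x 0⌋ : ℤ) (-⌊x 1⌋ : ℤ) = e2 (Int.fract (x 0)) (Int.fract (x 1)) := by
    ext i; fin_cases i <;> simp [Int.fract, sub_eq_add_neg]
  rw [hx, mem_closedBall_zero_iff]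
  have := norm_e2_le (Int.fract (x 0)) (Int.fract (x 1))
  rw [Int.abs_fract, Int.abs_fract] at this
  linarith [Int.fract_lt_one (x 0), Int.fract_lt_one (x 1)]

theorem exists_norm_iteratedFDeriv_le_of_e2_int_periodic {F : Type*} [NormedAddCommGroup F]
    [NormedSpace ℝ F] {m : ℕ} {f : EuclideanSpace ℝ (Fin 2) → F} (hf : ContDiff ℝ m f)
    (hper : ∀ z (k l : ℤ), f (z + e2 k l) = f z) :
    ∃ M, ∀ i ≤ m, ∀ z, ‖iteratedFDeriv ℝ i f z‖ ≤ M := by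
  refine exists_norm_iteratedFDeriv_le_of_periodic hf
    (Γ := Set.range fun k : ℤ × ℤ => e2 k.1 k.2) ?_ (isCompact_closedBall 0 2)
    (by simpa using exists_add_e2_int_mem_closedBall)
  rintro _ ⟨k, rfl⟩ z
  exact hper z k.1 k.2

end Plane

theorem isBilinearMap_stdSymp (n : ℕ) : IsBilinearMap ℝ (stdSymp n) where
  add_left u v w := by
    simp only [stdSymp, PiLp.add_apply, ← Finset.sum_add_distrib]
    exact Finset.sum_congr rfl fun _ _ => by ring
  smul_left c u v := by
    simp only [stdSymp, PiLp.smul_apply, smul_eq_mul, Finset.mul_sum]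
    exact Finset.sum_congr rfl fun _ _ => by ring
  add_right u v w := by
    simp only [stdSymp, PiLp.add_apply, ← Finset.sum_add_distrib]
    exact Finset.sum_congr rfl fun _ _ => by ring
  smul_right c u v := by
    simp only [stdSymp, PiLp.smul_apply, smul_eq_mul, Finset.mul_sum]
    exact Finset.sum_congr rfl fun _ _ => by ring

theorem stdSymp_self (n : ℕ) (u : EuclideanSpace ℝ (Fin (2 * n))) : stdSymp n u u = 0 :=
  Finset.sum_eq_zero fun _ _ => by ring

theorem diagonalPairing_stdSymp (n : ℕ)
    (ℓ : EuclideanSpace ℝ (Fin 2) → EuclideanSpace ℝ (Fin (2 * n))) (N : ℕ)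
    (z : EuclideanSpace ℝ (Fin 2)) :
    diagonalPairing (isBilinearMap_stdSymp n).toContinuousBilinearMap ℓ
        (e2 (1 / N) 0) (e2 0 (1 / N)) z = stdSymp n (Du n ℓ N z) (Dv n ℓ N z) := by
  simp only [diagonalPairing, Du, Dv, e2_add, add_zero, zero_add,
    IsBilinearMap.toContinuousBilinearMap_apply]

theorem discrete_symplectic_density_weak_C1_estimate_general {F G : Type*}
    [NormedAddCommGroup F] [NormedSpace ℝ F] [NormedAddCommGroup G] [NormedSpace ℝ G]
    (B : F →L[ℝ] F →L[ℝ] G) (hB : ∀ x, B x x = 0) {f : EuclideanSpace ℝ (Fin 2) → F} {M : ℝ}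
    (hf : ContDiff ℝ 4 f) (hM : ∀ i ∈ Finset.Icc 1 4, ∀ x, ‖iteratedFDeriv ℝ i f x‖ ≤ M)
    (hiso : ∀ z, B (fderiv ℝ f z (e2 1 0)) (fderiv ℝ f z (e2 0 1)) = 0) :
    ∃ C > 0, ∀ (h : ℝ) (z : EuclideanSpace ℝ (Fin 2)),
      ∀ t ∈ ({e2 h h, e2 (-h) h} : Set (EuclideanSpace ℝ (Fin 2))),
        ‖diagonalPairing B f (e2 h 0) (e2 0 h) (z + t) -
          diagonalPairing B f (e2 h 0) (e2 0 h) z‖ ≤ C * |h| ^ 5 := by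
  refine ⟨32 * ‖B‖ * M ^ 2 + 1, by positivity, fun h z t ht => ?_⟩
  have hp : ‖e2 h 0‖ ≤ |h| := by simpa using norm_e2_le h 0
  have hq : ‖e2 0 h‖ ≤ |h| := by simpa using norm_e2_le 0 h
  have ht : ‖t‖ ≤ 2 * |h| := by
    rcases ht with rfl | rfl
    · simpa [two_mul] using norm_e2_le h h
    · simpa [two_mul] using norm_e2_le (-h) h
  have hiso' (x) : B (fderiv ℝ f x (e2 h 0)) (fderiv ℝ f x (e2 0 h)) = 0 := by
    have hp_smul : e2 h 0 = h • e2 1 0 := by simp [smul_e2]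
    have hq_smul : e2 0 h = h • e2 0 1 := by simp [smul_e2]
    simp [hp_smul, hq_smul, hiso]
  calc
    _ ≤ ‖B‖ * M ^ 2 * (‖e2 h 0‖ + ‖e2 0 h‖) ^ 4 * ‖t‖ :=
      norm_diagonalPairing_add_sub_le B hB hf hM hiso' z t
    _ ≤ ‖B‖ * M ^ 2 * (|h| + |h|) ^ 4 * (2 * |h|) := by gcongr
    _ = 32 * ‖B‖ * M ^ 2 * |h| ^ 5 := by ring
    _ ≤ (32 * ‖B‖ * M ^ 2 + 1) * |h| ^ 5 := by gcongr; linarith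

/-- For a `C⁴`, `ℤ²`-periodic, isotropic map `ℓ : ℝ² → ℝ^{2n}`, the diagonal finite
differences of the symplectic area defect `ω(Dᵘ_N, Dᵛ_N)` of the sample quadrilaterals
are `O(N^{-5})` uniformly; hence the discrete symplectic density is `O(N^{-2})` in the
weak discrete `C¹`-norm. -/
theorem discrete_symplectic_density_weak_C1_estimate (n : ℕ)
    (ℓ : EuclideanSpace ℝ (Fin 2) → EuclideanSpace ℝ (Fin (2 * n)))
    (hC4 : ContDiff ℝ 4 ℓ)
    (hper : ∀ (z : EuclideanSpace ℝ (Fin 2)) (k l : ℤ), ℓ (z + e2 k l) = ℓ z)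
    (hiso : ∀ z : EuclideanSpace ℝ (Fin 2),
      stdSymp n (fderiv ℝ ℓ z (e2 1 0)) (fderiv ℝ ℓ z (e2 0 1)) = 0) :
    ∃ C > 0, ∀ (N : ℕ), 1 ≤ N → ∀ z : EuclideanSpace ℝ (Fin 2),
      ∀ t ∈ ({e2 (1 / N) (1 / N), e2 (-(1 / N)) (1 / N)} :
          Set (EuclideanSpace ℝ (Fin 2))),
        |stdSymp n (Du n ℓ N (z + t)) (Dv n ℓ N (z + t))
            - stdSymp n (Du n ℓ N z) (Dv n ℓ N z)| ≤ C / (N : ℝ) ^ 5 := by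
  obtain ⟨M, hM⟩ := exists_norm_iteratedFDeriv_le_of_e2_int_periodic hC4 hper
  obtain ⟨C, hC, hbound⟩ := discrete_symplectic_density_weak_C1_estimate_general
    (isBilinearMap_stdSymp n).toContinuousBilinearMap (stdSymp_self n) hC4
    (fun i hi => hM i (Finset.mem_Icc.1 hi).2) hiso
  exact ⟨C, hC, fun N _ z t ht => by
    simpa [← diagonalPairing_stdSymp, div_eq_mul_inv] using hbound (1 / N) z t ht⟩
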